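/- Let a_{n,k} = |S_{n,k}^{1≺n}(1324)| (with a_{n,k} = 0 when no such permutations exist). In the ring of formal power series over the integers, define f = Σ_{n≥1} a_{n+1,1} x^n and, for k ≥ 1, T_{1,k} = Σ_{n≥1} a_{n,k} x^n. Then for every k ≥ 1, T_{1,k} = x · f^k. -/

import Mathlib

/-- A permutation of `{1,…,n}` (encoded as `Equiv.Perm (Fin n)` with 0-based values)
avoids the pattern 1324 if there are no indices `i < j < k < l` with
`σ i < σ k < σ j < σ l`. -/
def Avoids1324 {n : ℕ} (σ : Equiv.Perm (Fin n)) : Prop :=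
  ¬ ∃ i j k l : Fin n, i < j ∧ j < k ∧ k < l ∧ σ i < σ k ∧ σ k < σ j ∧ σ j < σ l

/-- The set `S_{n,k}^{a ≺ n}(1324)`: 1324-avoiding permutations with the entry `a`
exactly `k` places to the left of the entry `n`, and the entries `1, …, a-1` all to
the right of `n`.  (Values are 0-based: the entry `a` is `⟨a-1, _⟩`.) -/
def SPerm (n a k : ℕ) : Set (Equiv.Perm (Fin n)) :=
  {σ | Avoids1324 σ ∧ ∃ hn : n - 1 < n, ∃ ha : a - 1 < n,
    ((σ.symm ⟨n - 1, hn⟩ : Fin n) : ℕ) = ((σ.symm ⟨a - 1, ha⟩ : Fin n) : ℕ) + k ∧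
    ∀ b : Fin n, (b : ℕ) + 1 < a → σ.symm ⟨n - 1, hn⟩ < σ.symm b}

/-!
Cut a 1324-avoiding word in which the least letter `lo` precedes the greatest letter `hi` as
`A lo B hi C`. Then `B` is increasing, and for each letter `b` of `B` both `A` and `C` consist of
letters above `b` followed by letters below `b`. Hence the word is determined by its restrictions
to the letters up to `b` and to the letters from `b` on, which are again such words, with `b` as
greatest and as least letter. Conversely, any two such words glue to a 1324-avoiding word. Taking
for `b` the letter `k` places to the right of `lo` shows that the generating functions of these
words, by the distance of `hi` from `lo`, satisfy `t (k + m) = t k * t m`, so `t k = t 1 ^ k`.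
-/

section ListAvoids1324

open List

variable {α β : Type*}

/-- The word `l` avoids the pattern 1324. The values of an occurrence, read from left to right,
form the sublist `[p, q, r, s]`. -/
def ListAvoids1324 [LT α] (l : List α) : Prop :=
  ∀ ⦃p q r s : α⦄, [p, q, r, s] <+ l → p < r → r < q → ¬ q < s

theorem ListAvoids1324.sublist [LT α] {l m : List α} (hm : ListAvoids1324 m) (h : l <+ m) :
    ListAvoids1324 l :=
  fun _ _ _ _ hs => hm (hs.trans h)

theorem listAvoids1324_map_iff [Preorder α] [Preorder β] (f : α ↪o β) {l : List α} :
    ListAvoids1324 (l.map f) ↔ ListAvoids1324 l := by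
  refine ⟨fun h p q r s hs => ?_, fun h p q r s hs => ?_⟩
  · simpa only [f.lt_iff_lt] using h (hs.map f)
  · obtain ⟨m, hm, hpqrs⟩ := sublist_map_iff.1 hs
    obtain ⟨p', q', r', s', rfl⟩ := length_eq_four.1 (by simpa using congrArg length hpqrs.symm)
    simp only [map_cons, map_nil, cons.injEq, and_true] at hpqrs
    obtain ⟨rfl, rfl, rfl, rfl⟩ := hpqrs
    simpa only [f.lt_iff_lt] using h hm

theorem sublist_of_cons_sublist_append {a : α} {t x y : List α} (h : a :: t <+ x ++ y)
    (ha : a ∉ x) : a :: t <+ y := by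
  obtain ⟨u, v, huv, hu, hv⟩ := sublist_append_iff.1 h
  cases u with
  | nil => exact huv ▸ hv
  | cons b u => exact absurd (hu.subset (by simp_all)) ha

theorem sublist_of_concat_sublist_append {a : α} {t x y : List α} (h : t ++ [a] <+ x ++ y)
    (ha : a ∉ y) : t ++ [a] <+ x := by
  rw [← reverse_sublist] at h ⊢
  simp only [reverse_append, reverse_singleton, singleton_append] at h ⊢
  exact sublist_of_cons_sublist_append h (by simpa using ha)

variable [LinearOrder α] {b : α}

theorem filter_le_append_cons_append {u x y v : List α} (hu : ∀ a ∈ u, b < a)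
    (hx : ∀ a ∈ x, a < b) (hy : ∀ a ∈ y, b < a) (hv : ∀ a ∈ v, a < b) :
    (u ++ (x ++ b :: (y ++ v))).filter (· ≤ b) = x ++ b :: v := by
  have hub : u.filter (· ≤ b) = [] := filter_eq_nil_iff.2 (by simpa using hu)
  have hxb : x.filter (· ≤ b) = x := filter_eq_self.2 (by simpa using fun a ha => (hx a ha).le)
  have hyb : y.filter (· ≤ b) = [] := filter_eq_nil_iff.2 (by simpa using hy)
  have hvb : v.filter (· ≤ b) = v := filter_eq_self.2 (by simpa using fun a ha => (hv a ha).le)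
  simp [hub, hxb, hyb, hvb]

theorem filter_ge_append_cons_append {u x y v : List α} (hu : ∀ a ∈ u, b < a)
    (hx : ∀ a ∈ x, a < b) (hy : ∀ a ∈ y, b < a) (hv : ∀ a ∈ v, a < b) :
    (u ++ (x ++ b :: (y ++ v))).filter (b ≤ ·) = u ++ b :: y := by
  have hub : u.filter (b ≤ ·) = u := filter_eq_self.2 (by simpa using fun a ha => (hu a ha).le)
  have hxb : x.filter (b ≤ ·) = [] := filter_eq_nil_iff.2 (by simpa using hx)
  have hyb : y.filter (b ≤ ·) = y := filter_eq_self.2 (by simpa using fun a ha => (hy a ha).le)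
  have hvb : v.filter (b ≤ ·) = [] := filter_eq_nil_iff.2 (by simpa using hv)
  simp [hub, hxb, hyb, hvb]

-- The letter `b` takes the place of the last letter of an occurrence cut as `pqr|s` between `x`
-- and `y`, and of the first letter of one cut as `p|qrs`; the other cuts contradict `r < q`.
theorem ListAvoids1324.not_sublist_append_cons {x y : List α} (hx : ∀ a ∈ x, a < b)
    (hy : ∀ a ∈ y, b < a) (hxb : ListAvoids1324 (x ++ [b])) (hby : ListAvoids1324 (b :: y))
    {p q r s : α} (hpb : p < b) (hbs : b < s) (hpr : p < r) (hrq : r < q) (hqs : q < s) :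
    ¬ [p, q, r, s] <+ x ++ b :: y := by
  intro h
  obtain ⟨l₁, l₂, hl, h₁, h₂⟩ := sublist_append_iff.1 h
  have hl₁ : ∀ a ∈ l₁, a < b := fun a ha => hx a (h₁.subset ha)
  have hl₂ : ∀ a ∈ l₂, b ≤ a := fun a ha =>
    (mem_cons.1 (h₂.subset ha)).elim (fun h => h.ge) fun ha => (hy a ha).le
  match l₁, hl with
  | [], hl =>
    obtain rfl : _ = l₂ := hl
    exact hpb.not_ge (hl₂ p (by simp))
  | [_], hl =>
    obtain ⟨rfl, rfl⟩ : _ ∧ _ := by simpa using hl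
    have hbr : b ≤ r := hl₂ r (by simp)
    have hqrs : [q, r, s] <+ y :=
      sublist_of_cons_sublist_append (x := [b]) h₂
        fun hq => (hbr.trans_lt hrq).ne' (mem_singleton.1 hq)
    exact hby (hqrs.cons_cons b) (hy r (hqrs.subset (by simp))) hrq hqs
  | [_, _], hl =>
    obtain ⟨rfl, rfl, rfl⟩ : _ ∧ _ ∧ _ := by simpa using hl
    exact ((hl₁ q (by simp)).trans_le (hl₂ r (by simp))).not_gt hrq
  | [_, _, _], hl =>
    obtain ⟨rfl, rfl, rfl, rfl⟩ : _ ∧ _ ∧ _ ∧ _ := by simpa using hl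
    exact hxb (h₁.append (Sublist.refl [b])) hpr hrq (hl₁ q (by simp))
  | _ :: _ :: _ :: s' :: l, hl =>
    obtain ⟨rfl, rfl, rfl, rfl, -⟩ : _ ∧ _ ∧ _ ∧ _ ∧ _ := by simpa using hl
    exact hbs.not_gt (hl₁ s (by simp))

theorem ListAvoids1324.glue {u x y v : List α} (hu : ∀ a ∈ u, b < a) (hx : ∀ a ∈ x, a < b)
    (hy : ∀ a ∈ y, b < a) (hv : ∀ a ∈ v, a < b) (hlow : ListAvoids1324 (x ++ b :: v))
    (hhigh : ListAvoids1324 (u ++ b :: y)) : ListAvoids1324 (u ++ (x ++ b :: (y ++ v))) := by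
  intro p q r s h hpr hrq hqs
  rcases le_or_gt s b with hsb | hbs
  · have hle : [p, q, r, s].filter (· ≤ b) = [p, q, r, s] :=
      filter_eq_self.2 (by grind)
    have := h.filter (· ≤ b)
    rw [hle, filter_le_append_cons_append hu hx hy hv] at this
    exact hlow this hpr hrq hqs
  rcases le_or_gt b p with hbp | hpb
  · have hge : [p, q, r, s].filter (b ≤ ·) = [p, q, r, s] :=
      filter_eq_self.2 (by grind)
    have := h.filter (b ≤ ·)
    rw [hge, filter_ge_append_cons_append hu hx hy hv] at this
    exact hhigh this hpr hrq hqs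
  · have hpu : p ∉ u := fun hp => hpb.not_gt (hu p hp)
    have hsv : s ∉ v := fun hs => hbs.not_gt (hv s hs)
    have h' : [p, q, r] ++ [s] <+ (x ++ b :: y) ++ v := by
      simpa using sublist_of_cons_sublist_append h hpu
    exact (hlow.sublist (by simp)).not_sublist_append_cons hx hy (hhigh.sublist (by simp))
      hpb hbs hpr hrq hqs (sublist_of_concat_sublist_append h' hsv)

end ListAvoids1324

section IsListing

open List Set

variable {α β : Type*}

/-- The word `l` lists every element of `s` exactly once. -/
structure IsListing (l : List α) (s : Set α) : Prop where
  nodup : l.Nodup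
  mem_iff : ∀ a, a ∈ l ↔ a ∈ s

theorem IsListing.perm {l m : List α} {s : Set α} (hl : IsListing l s) (h : l ~ m) :
    IsListing m s :=
  ⟨h.nodup hl.nodup, fun a => h.mem_iff.symm.trans (hl.mem_iff a)⟩

theorem isListing_map_iff {f : α → β} (hf : f.Injective) {l : List α} {s : Set α} :
    IsListing (l.map f) (f '' s) ↔ IsListing l s := by
  refine ⟨fun h => ⟨h.nodup.of_map, fun a => ?_⟩, fun h => ⟨h.nodup.map hf, fun b => ?_⟩⟩
  · rw [← mem_map_of_injective hf, h.mem_iff, hf.mem_set_image]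
  · simp only [List.mem_map, h.mem_iff, mem_image]

variable [LinearOrder α] {lo b hi : α}

theorem isListing_cons_cons_Icc_iff {l : List α} (h : lo ≤ hi) :
    IsListing (lo :: hi :: l) (Icc lo hi) ↔ lo < hi ∧ IsListing l (Ioo lo hi) := by
  constructor
  · rintro ⟨hnodup, hmem⟩
    simp only [nodup_cons, List.mem_cons, not_or] at hnodup
    obtain ⟨⟨hne, hlo⟩, hhi, hl⟩ := hnodup
    refine ⟨h.lt_of_ne hne, hl, fun a => ⟨fun ha => ?_, fun ha => ?_⟩⟩
    · have ha' : a ∈ Icc lo hi := (hmem a).1 (by simp [ha])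
      exact ⟨ha'.1.lt_of_ne fun h => hlo (h ▸ ha), ha'.2.lt_of_ne fun h => hhi (h ▸ ha)⟩
    · simpa [ha.1.ne', ha.2.ne] using (hmem a).2 (Ioo_subset_Icc_self ha)
  · rintro ⟨hlt, hl⟩
    refine ⟨by simp [hl.mem_iff, hl.nodup, hlt.ne], fun a => ?_⟩
    simp only [List.mem_cons, hl.mem_iff, mem_Icc, mem_Ioo]
    grind

theorem isListing_append_cons_Ioo_iff {u v : List α} (hlo : lo < b) (hhi : b < hi)
    (hu : ∀ a ∈ u, a < b) (hv : ∀ a ∈ v, b < a) :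
    IsListing (u ++ b :: v) (Ioo lo hi) ↔ IsListing u (Ioo lo b) ∧ IsListing v (Ioo b hi) := by
  constructor
  · rintro ⟨hnodup, hmem⟩
    simp only [List.mem_append, List.mem_cons, mem_Ioo] at hmem
    obtain ⟨hu', hv', -⟩ := nodup_append.1 hnodup
    refine ⟨⟨hu', fun a => ?_⟩, hv'.of_cons, fun a => ?_⟩ <;> rw [mem_Ioo] <;> grind
  · rintro ⟨⟨hu', hmemu⟩, ⟨hv', hmemv⟩⟩
    simp only [mem_Ioo] at hmemu hmemv
    refine ⟨by grind, fun a => ?_⟩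
    rw [List.mem_append, List.mem_cons, mem_Ioo]
    grind

theorem exists_eq_append_of_pairwise {l : List α} (hb : b ∉ l)
    (hl : l.Pairwise fun x y => x < b → y ≤ b) :
    ∃ u v, l = u ++ v ∧ (∀ a ∈ u, b < a) ∧ ∀ a ∈ v, a < b := by
  induction l with
  | nil => exact ⟨[], [], by simp⟩
  | cons a l ih =>
    obtain ⟨hal, hl⟩ := pairwise_cons.1 hl
    rcases (ne_of_not_mem_cons hb).lt_or_gt with hba | hab
    · obtain ⟨u, v, rfl, hu, hv⟩ := ih (not_mem_of_not_mem_cons hb) hl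
      exact ⟨a :: u, v, rfl, by simpa using ⟨hba, hu⟩, hv⟩
    · exact ⟨[], a :: l, rfl, by simp, by grind⟩

theorem append_inj_of_separated {u v u' v' : List α} (hu : ∀ a ∈ u, b < a) (hv : ∀ a ∈ v, a < b)
    (hu' : ∀ a ∈ u', b < a) (hv' : ∀ a ∈ v', a < b) (h : u ++ v = u' ++ v') : u = u' ∧ v = v' := by
  have key : ∀ {x y : List α}, (∀ a ∈ x, b < a) → (∀ a ∈ y, a < b) →
      (x ++ y).filter (b < ·) = x := by
    intro x y hx hy
    rw [filter_append, filter_eq_self.2 (by simpa using hx),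
      filter_eq_nil_iff.2 (by simpa using fun a ha => (hy a ha).le), append_nil]
  obtain rfl : u = u' := by rw [← key hu hv, h, key hu' hv']
  exact ⟨rfl, append_cancel_left h⟩

end IsListing

/-- The parts of a word to the left of, between and to the right of two chosen letters `lo` and
`hi` occurring in this order. The two letters themselves are not recorded. -/
@[ext]
structure Dissection (α : Type*) where
  left : List α
  middle : List α
  right : List α

namespace Dissection

open List Set

variable {α β : Type*}

/-- The word dissected by `D` at the letters `lo` and `hi`. -/
def word (D : Dissection α) (lo hi : α) : List α :=
  D.left ++ lo :: (D.middle ++ hi :: D.right)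

/-- The letters other than the two at which the word is dissected. -/
def letters (D : Dissection α) : List α :=
  D.left ++ (D.middle ++ D.right)

/-- The gluing at `b` of a word dissected at `lo` and `b` and a word dissected at `b` and `hi`. On
either side the letters of `V`, meant to be the larger ones, come first. -/
def glue (b : α) (U V : Dissection α) : Dissection α :=
  ⟨V.left ++ U.left, U.middle ++ b :: V.middle, V.right ++ U.right⟩

theorem word_perm (D : Dissection α) (lo hi : α) : D.word lo hi ~ lo :: hi :: D.letters := by
  have h : D.left ++ (D.middle ++ hi :: D.right) ~ hi :: D.letters := by
    simpa only [letters, append_assoc] using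
      perm_middle (a := hi) (l₁ := D.left ++ D.middle) (l₂ := D.right)
  exact perm_middle.trans (h.cons lo)

theorem letters_glue_perm (b : α) (U V : Dissection α) :
    (glue b U V).letters ~ U.letters ++ b :: V.letters := by
  classical
  simp only [perm_iff_count, letters, glue, count_append, count_cons]
  lia

/-- The letterwise image of a dissected word. -/
def map (f : α → β) (D : Dissection α) : Dissection β :=
  ⟨D.left.map f, D.middle.map f, D.right.map f⟩

theorem map_injective {f : α → β} (hf : f.Injective) : (map f).Injective := fun D E h => by
  simpa only [map, mk.injEq, hf.list_map.eq_iff, ← Dissection.ext_iff] using h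

variable [LinearOrder α] {lo b hi : α} {D U V : Dissection α}

/-- The words listing the interval from `lo` to `hi`, with `lo` to the left of `hi`, that avoid
the pattern 1324, in terms of their dissection at `lo` and `hi`. -/
structure IsAvoiding (lo hi : α) (D : Dissection α) : Prop where
  lt : lo < hi
  listing : IsListing D.letters (Ioo lo hi)
  avoids : ListAvoids1324 (D.word lo hi)

theorem IsAvoiding.listing_word (h : D.IsAvoiding lo hi) :
    IsListing (D.word lo hi) (Icc lo hi) :=
  ((isListing_cons_cons_Icc_iff h.lt.le).2 ⟨h.lt, h.listing⟩).perm (D.word_perm lo hi).symm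

theorem IsAvoiding.mem_Ioo {a : α} (h : D.IsAvoiding lo hi) (ha : a ∈ D.letters) :
    a ∈ Ioo lo hi :=
  (h.listing.mem_iff a).1 ha

theorem IsAvoiding.glue (hU : U.IsAvoiding lo b) (hV : V.IsAvoiding b hi) :
    (glue b U V).IsAvoiding lo hi := by
  have hlow : ∀ a ∈ U.letters, a < b := fun a ha => (hU.mem_Ioo ha).2
  have hhigh : ∀ a ∈ V.letters, b < a := fun a ha => (hV.mem_Ioo ha).1
  have hlist := (isListing_append_cons_Ioo_iff hU.lt hV.lt hlow hhigh).2 ⟨hU.listing, hV.listing⟩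
  refine ⟨hU.lt.trans hV.lt, hlist.perm (letters_glue_perm b U V).symm, ?_⟩
  simp only [letters, List.mem_append] at hlow hhigh
  have := ListAvoids1324.glue (b := b) (u := V.left) (x := U.left ++ lo :: U.middle)
    (y := V.middle ++ hi :: V.right) (v := U.right) (by grind) (by grind [hU.lt])
    (by grind [hV.lt]) (by grind) (by simpa [word] using hU.avoids) hV.avoids
  simpa [word, Dissection.glue] using this

theorem IsAvoiding.of_glue (h : (Dissection.glue b U V).IsAvoiding lo hi)
    (hU : ∀ a ∈ U.letters, a < b) (hV : ∀ a ∈ V.letters, b < a) :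
    U.IsAvoiding lo b ∧ V.IsAvoiding b hi := by
  obtain ⟨hlo, hhi⟩ : b ∈ Ioo lo hi :=
    h.mem_Ioo ((letters_glue_perm b U V).mem_iff.2 (by simp))
  obtain ⟨hlistU, hlistV⟩ := (isListing_append_cons_Ioo_iff hlo hhi hU hV).1
    (h.listing.perm (letters_glue_perm b U V))
  refine ⟨⟨hlo, hlistU, h.avoids.sublist ?_⟩, ⟨hhi, hlistV, h.avoids.sublist ?_⟩⟩
  · simp only [word, Dissection.glue, append_assoc, cons_append]
    refine ((Sublist.refl _).append (Sublist.cons_cons _ ?_)).trans (sublist_append_right _ _)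
    refine (Sublist.refl _).append (Sublist.cons_cons _ ?_)
    exact ((sublist_append_right _ _).cons _).trans (sublist_append_right _ _)
  · simp only [word, Dissection.glue, append_assoc, cons_append]
    refine (Sublist.refl _).append ?_
    refine .trans (.trans ?_ ((sublist_append_right U.middle _).cons lo)) (sublist_append_right _ _)
    simp

-- Otherwise two letters `y < x` of the middle would form an occurrence `lo x y hi`.
theorem IsAvoiding.pairwise_lt_middle (h : D.IsAvoiding lo hi) : D.middle.Pairwise (· < ·) := by
  have hmem : ∀ a ∈ D.middle, a ∈ Ioo lo hi := fun a ha => h.mem_Ioo (by simp [letters, ha])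
  have hnodup : D.middle.Nodup := h.listing.nodup.of_append_right.of_append_left
  refine pairwise_iff_forall_sublist.2 fun {x y} hxy => ?_
  have hne : x ≠ y := pairwise_iff_forall_sublist.1 hnodup hxy
  refine hne.lt_or_gt.resolve_right fun hyx => ?_
  have hocc : [lo, x, y, hi] <+ D.word lo hi :=
    ((hxy.append (singleton_sublist.2 mem_cons_self)).cons_cons lo).trans
      (sublist_append_right _ _)
  exact h.avoids hocc (hmem y (hxy.subset (by simp))).1 hyx (hmem x (hxy.subset (by simp))).2

-- Otherwise there would be an occurrence `x y b hi`.
theorem IsAvoiding.pairwise_left (h : D.IsAvoiding lo hi) (hb : b ∈ D.middle) :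
    D.left.Pairwise fun x y => x < b → y ≤ b := by
  refine pairwise_iff_forall_sublist.2 fun {x y} hxy hxb => not_lt.1 fun hby => ?_
  have hocc : [x, y, b, hi] <+ D.word lo hi :=
    hxy.append (((singleton_sublist.2 hb).append (singleton_sublist.2 mem_cons_self)).cons lo)
  have hy : y ∈ D.letters := mem_append_left _ (hxy.subset (by simp))
  exact h.avoids hocc hxb hby (h.mem_Ioo hy).2

-- Otherwise there would be an occurrence `lo b x y`.
theorem IsAvoiding.pairwise_right (h : D.IsAvoiding lo hi) (hb : b ∈ D.middle) :
    D.right.Pairwise fun x y => x < b → y ≤ b := by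
  refine pairwise_iff_forall_sublist.2 fun {x y} hxy hxb => not_lt.1 fun hby => ?_
  have hocc : [lo, b, x, y] <+ D.word lo hi :=
    (((singleton_sublist.2 hb).append (hxy.cons hi)).cons_cons lo).trans
      (sublist_append_right _ _)
  have hx : x ∈ D.letters := mem_append_right _ (mem_append_right _ (hxy.subset (by simp)))
  exact h.avoids hocc (h.mem_Ioo hx).1 hxb hby

theorem IsAvoiding.exists_glue_eq (h : D.IsAvoiding lo hi) {x y : List α}
    (hD : D.middle = x ++ b :: y) : ∃ U V, U.IsAvoiding lo b ∧ V.IsAvoiding b hi ∧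
      Dissection.glue b U V = D ∧ U.middle = x ∧ V.middle = y := by
  have hb : b ∈ D.middle := by simp [hD]
  have hnodup : (D.left ++ (D.middle ++ D.right)).Nodup := h.listing.nodup
  obtain ⟨-, hby, hxb⟩ := pairwise_append.1 (hD ▸ h.pairwise_lt_middle)
  have hby : ∀ a ∈ y, b < a := fun _ => rel_of_pairwise_cons hby
  have hxb : ∀ a ∈ x, a < b := fun a ha => hxb a ha b mem_cons_self
  obtain ⟨l, l', hl, hbl, hl'b⟩ := exists_eq_append_of_pairwise (by grind) (h.pairwise_left hb)
  obtain ⟨r, r', hr, hbr, hr'b⟩ := exists_eq_append_of_pairwise (by grind) (h.pairwise_right hb)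
  have hglue : Dissection.glue b ⟨l', x, r'⟩ ⟨l, y, r⟩ = D :=
    Dissection.ext hl.symm hD.symm hr.symm
  obtain ⟨hU, hV⟩ := (hglue ▸ h).of_glue (U := ⟨l', x, r'⟩) (V := ⟨l, y, r⟩)
    (by simp only [letters, List.mem_append]; grind)
    (by simp only [letters, List.mem_append]; grind)
  exact ⟨_, _, hU, hV, hglue, rfl, rfl⟩

theorem IsAvoiding.glue_inj {b' : α} {U' V' : Dissection α} (hU : U.IsAvoiding lo b)
    (hV : V.IsAvoiding b hi) (hU' : U'.IsAvoiding lo b') (hV' : V'.IsAvoiding b' hi)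
    (hlen : U.middle.length = U'.middle.length)
    (h : Dissection.glue b U V = Dissection.glue b' U' V') : b = b' ∧ U = U' ∧ V = V' := by
  simp only [Dissection.glue, mk.injEq] at h
  obtain ⟨hleft, hmiddle, hright⟩ := h
  obtain ⟨hUmiddle, hcons⟩ := append_inj hmiddle hlen
  obtain ⟨rfl, hVmiddle⟩ := cons_eq_cons.1 hcons
  have hlow : ∀ {W : Dissection α}, W.IsAvoiding lo b → ∀ a ∈ W.letters, a < b :=
    fun hW a ha => (hW.mem_Ioo ha).2
  have hhigh : ∀ {W : Dissection α}, W.IsAvoiding b hi → ∀ a ∈ W.letters, b < a :=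
    fun hW a ha => (hW.mem_Ioo ha).1
  simp only [letters, List.mem_append] at hlow hhigh
  obtain ⟨hVleft, hUleft⟩ := append_inj_of_separated (b := b) (by grind) (by grind) (by grind)
    (by grind) hleft
  obtain ⟨hVright, hUright⟩ := append_inj_of_separated (b := b) (by grind) (by grind) (by grind)
    (by grind) hright
  exact ⟨rfl, Dissection.ext hUleft hUmiddle hUright, Dissection.ext hVleft hVmiddle hVright⟩

/-- The avoiding words from `lo` to `hi` in which `hi` occurs exactly `k` places to the right
of `lo`. -/
def Avoiders (lo hi : α) (k : ℕ) : Set (Dissection α) :=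
  {D | D.IsAvoiding lo hi ∧ D.middle.length + 1 = k}

theorem glue_mem_avoiders {k m : ℕ} (hU : U ∈ Avoiders lo b k) (hV : V ∈ Avoiders b hi m) :
    glue b U V ∈ Avoiders lo hi (k + m) := by
  refine ⟨hU.1.glue hV.1, ?_⟩
  have := hU.2
  have := hV.2
  simp only [glue, length_append, length_cons]
  lia

theorem exists_glue_eq_of_mem_avoiders {k m : ℕ} (hk : 1 ≤ k) (hm : 1 ≤ m)
    (hD : D ∈ Avoiders lo hi (k + m)) :
    ∃ b, ∃ U ∈ Avoiders lo b k, ∃ V ∈ Avoiders b hi m, glue b U V = D := by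
  obtain ⟨h, hlen⟩ := hD
  obtain ⟨k, rfl⟩ := Nat.exists_eq_add_of_le' hk
  have hlt : k < D.middle.length := by lia
  have hsplit : D.middle = D.middle.take k ++ D.middle[k] :: D.middle.drop (k + 1) := by
    rw [getElem_cons_drop, take_append_drop]
  obtain ⟨U, V, hU, hV, hglue, hUm, hVm⟩ := h.exists_glue_eq hsplit
  refine ⟨_, U, ⟨hU, ?_⟩, V, ⟨hV, ?_⟩, hglue⟩
  · rw [hUm, length_take]
    lia
  · rw [hVm, length_drop]
    lia

theorem word_injOn_isAvoiding : InjOn (word · lo hi) {D : Dissection α | D.IsAvoiding lo hi} := by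
  intro D hD E _ h
  obtain ⟨hlo, hhi⟩ : (lo ∉ D.left ∧ lo ∉ D.middle ++ hi :: D.right) ∧
      hi ∉ D.middle ∧ hi ∉ D.right := by
    have := hD.listing_word.nodup
    simp only [word] at this
    grind
  obtain ⟨hleft, -, htail⟩ := (append_cons_inj_of_notMem hlo.1 hlo.2).1 h
  obtain ⟨hmiddle, -, hright⟩ := (append_cons_inj_of_notMem hhi.1 hhi.2).1 htail
  exact Dissection.ext hleft hmiddle hright

theorem finite_avoiders [LocallyFiniteOrder α] (lo hi : α) (k : ℕ) :
    (Avoiders lo hi k).Finite := by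
  have himage : (word · lo hi) '' Avoiders lo hi k ⊆
      {l | l ∈ (Finset.Icc lo hi).toList.permutations} := by
    rintro _ ⟨D, hD, rfl⟩
    refine mem_permutations.2 ((perm_ext_iff_of_nodup hD.1.listing_word.nodup
      (Finset.nodup_toList _)).2 fun a => ?_)
    rw [hD.1.listing_word.mem_iff, Finset.mem_toList, Finset.mem_Icc, mem_Icc]
  exact ((finite_toSet _).subset himage).of_finite_image
    (word_injOn_isAvoiding.mono fun _ hD => hD.1)

theorem avoiders_add_eq_biUnion [LocallyFiniteOrder α] {k m : ℕ} (hk : 1 ≤ k) (hm : 1 ≤ m) :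
    Avoiders lo hi (k + m) = ⋃ b ∈ Finset.Icc lo hi,
      (fun p : Dissection α × Dissection α => glue b p.1 p.2) ''
        (Avoiders lo b k ×ˢ Avoiders b hi m) := by
  ext D
  simp only [mem_iUnion, mem_image, mem_prod, Prod.exists, exists_prop]
  constructor
  · intro hD
    obtain ⟨b, U, hU, V, hV, rfl⟩ := exists_glue_eq_of_mem_avoiders hk hm hD
    exact ⟨b, Finset.mem_Icc.2 ⟨hU.1.lt.le, hV.1.lt.le⟩, U, V, ⟨hU, hV⟩, rfl⟩
  · rintro ⟨b, -, U, V, ⟨hU, hV⟩, rfl⟩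
    exact glue_mem_avoiders hU hV

theorem ncard_avoiders_add [LocallyFiniteOrder α] {k m : ℕ} (hk : 1 ≤ k) (hm : 1 ≤ m) :
    (Avoiders lo hi (k + m)).ncard =
      ∑ b ∈ Finset.Icc lo hi, (Avoiders lo b k).ncard * (Avoiders b hi m).ncard := by
  have hlen : ∀ {b b' : α} {U U' : Dissection α}, U ∈ Avoiders lo b k → U' ∈ Avoiders lo b' k →
      U.middle.length = U'.middle.length := fun hU hU' => Nat.succ.inj (hU.2.trans hU'.2.symm)
  have hinj (b : α) : InjOn (fun p : Dissection α × Dissection α => glue b p.1 p.2)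
      (Avoiders lo b k ×ˢ Avoiders b hi m) := fun p hp q hq h =>
    Prod.ext_iff.2 (hp.1.1.glue_inj hp.2.1 hq.1.1 hq.2.1 (hlen hp.1 hq.1) h).2
  rw [avoiders_add_eq_biUnion hk hm, ← Finset.set_biUnion_coe,
    (Finset.finite_toSet _).ncard_biUnion, finsum_mem_coe_finset]
  · exact Finset.sum_congr rfl fun b _ => by rw [(hinj b).ncard_image, ncard_prod]
  · exact fun b _ => ((finite_avoiders lo b k).prod (finite_avoiders b hi m)).image _
  · refine fun b _ b' _ hne => Set.disjoint_left.2 ?_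
    rintro _ ⟨p, hp, rfl⟩ ⟨q, hq, h⟩
    exact hne (hp.1.1.glue_inj hp.2.1 hq.1.1 hq.2.1 (hlen hp.1 hq.1) h.symm).1

variable [LinearOrder β] (f : α ↪o β)

theorem isAvoiding_map_iff (hf : f '' Ioo lo hi = Ioo (f lo) (f hi)) :
    (D.map f).IsAvoiding (f lo) (f hi) ↔ D.IsAvoiding lo hi := by
  have hletters : (D.map f).letters = D.letters.map f := by simp [map, letters]
  have hword : (D.map f).word (f lo) (f hi) = (D.word lo hi).map f := by simp [map, word]
  have hlisting : IsListing (D.map f).letters (Ioo (f lo) (f hi)) ↔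
      IsListing D.letters (Ioo lo hi) := by rw [hletters, ← hf, isListing_map_iff f.injective]
  have havoids : ListAvoids1324 ((D.map f).word (f lo) (f hi)) ↔
      ListAvoids1324 (D.word lo hi) := by rw [hword, listAvoids1324_map_iff]
  exact ⟨fun h => ⟨f.lt_iff_lt.1 h.lt, hlisting.1 h.listing, havoids.1 h.avoids⟩,
    fun h => ⟨f.lt_iff_lt.2 h.lt, hlisting.2 h.listing, havoids.2 h.avoids⟩⟩

theorem avoiders_map (hf : f '' Ioo lo hi = Ioo (f lo) (f hi)) (k : ℕ) :
    Avoiders (f lo) (f hi) k = map f '' Avoiders lo hi k := by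
  ext E
  constructor
  · rintro ⟨hE, hlen⟩
    have hrange : ∀ l : List β, l ⊆ E.letters → ∃ l' : List α, l'.map f = l := fun l hl => by
      rw [← Set.mem_range, range_list_map]
      intro b hb
      exact image_subset_range f _ (hf ▸ hE.mem_Ioo (hl hb))
    obtain ⟨l, hl⟩ := hrange E.left (by simp [letters])
    obtain ⟨m, hm⟩ := hrange E.middle (by simp [letters])
    obtain ⟨r, hr⟩ := hrange E.right (by simp [letters])
    obtain rfl : map f ⟨l, m, r⟩ = E := Dissection.ext hl hm hr
    exact ⟨_, ⟨(isAvoiding_map_iff f hf).1 hE, by simpa [map] using hlen⟩, rfl⟩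
  · rintro ⟨D, ⟨hD, hlen⟩, rfl⟩
    exact ⟨(isAvoiding_map_iff f hf).2 hD, by simpa [map] using hlen⟩

theorem ncard_avoiders_map (hf : f '' Ioo lo hi = Ioo (f lo) (f hi)) (k : ℕ) :
    (Avoiders (f lo) (f hi) k).ncard = (Avoiders lo hi k).ncard := by
  rw [avoiders_map f hf, ncard_image_of_injective _ (map_injective f.injective)]

end Dissection

section Permutations

open List Set Dissection

variable {n : ℕ}

theorem listAvoids1324_ofFn_iff (σ : Equiv.Perm (Fin n)) :
    ListAvoids1324 (ofFn σ) ↔ Avoids1324 σ := by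
  rw [ofFn_eq_map]
  constructor
  · rintro h ⟨i, j, k, l, hij, hjk, hkl, hik, hkj, hjl⟩
    have hsub : [i, j, k, l] <+ finRange n :=
      sublist_of_subperm_of_pairwise (subperm_of_subset (by grind) (by simp))
        (by grind) (pairwise_lt_finRange n)
    exact h (hsub.map σ) hik hkj hjl
  · intro h p q r s hs hpr hrq hqs
    obtain ⟨m, hm, hpqrs⟩ := sublist_map_iff.1 hs
    obtain ⟨i, j, k, l, rfl⟩ := length_eq_four.1 (by simpa using congrArg length hpqrs.symm)
    simp only [map_cons, map_nil, cons.injEq, and_true] at hpqrs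
    obtain ⟨rfl, rfl, rfl, rfl⟩ := hpqrs
    have hlt : [i, j, k, l].Pairwise (· < ·) := (pairwise_lt_finRange n).sublist hm
    simp only [pairwise_cons, List.mem_cons] at hlt
    exact h ⟨i, j, k, l, by grind, by grind, by grind, hpr, hrq, hqs⟩

theorem isListing_ofFn (σ : Equiv.Perm (Fin n)) : IsListing (ofFn σ) univ :=
  ⟨nodup_ofFn.2 σ.injective, fun a => by simpa using σ.surjective a⟩

theorem IsListing.exists_ofFn_eq {l : List (Fin n)} (h : IsListing l univ) :
    ∃ σ : Equiv.Perm (Fin n), ofFn σ = l := by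
  let e := h.nodup.getEquivOfForallMemList l fun a => (h.mem_iff a).2 (mem_univ a)
  have hlen : l.length = n := by simpa using Fintype.card_congr e
  exact ⟨(finCongr hlen.symm).trans e, (ofFn_congr hlen l.get).symm.trans (ofFn_get l)⟩

theorem symm_apply_eq_length_of_ofFn_eq {σ : Equiv.Perm (Fin n)} {u v : List (Fin n)} {a : Fin n}
    (h : ofFn σ = u ++ a :: v) : (σ.symm a : ℕ) = u.length := by
  have hlen : u.length < n := by
    have := congrArg length h
    simp only [length_ofFn, length_append, length_cons] at this
    lia
  have ha : σ ⟨u.length, hlen⟩ = a := by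
    have hget : (ofFn σ)[u.length]? = some a := by simp [h]
    simpa [hlen] using hget
  rw [← ha, σ.symm_apply_apply]

theorem mem_SPerm_one_iff {k : ℕ} {σ : Equiv.Perm (Fin (n + 1))} :
    σ ∈ SPerm (n + 1) 1 k ↔
      Avoids1324 σ ∧ (σ.symm (Fin.last n) : ℕ) = (σ.symm 0 : ℕ) + k := by
  constructor
  · rintro ⟨hσ, _, _, hk, -⟩
    exact ⟨hσ, hk⟩
  · rintro ⟨hσ, hk⟩
    exact ⟨hσ, by simp, by simp, hk, fun b hb => absurd hb (by lia)⟩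

theorem mem_SPerm_one_iff_mem_avoiders {k : ℕ} {σ : Equiv.Perm (Fin (n + 1))}
    {D : Dissection (Fin (n + 1))} (h : ofFn σ = D.word 0 (Fin.last n)) :
    σ ∈ SPerm (n + 1) 1 k ↔ D ∈ Avoiders 0 (Fin.last n) k := by
  have hIcc : Icc 0 (Fin.last n) = univ := Icc_bot_top
  obtain ⟨hlt, hlist⟩ := (isListing_cons_cons_Icc_iff (Fin.zero_le _)).1
    (hIcc ▸ (h ▸ isListing_ofFn σ).perm (D.word_perm _ _))
  have havoids : D.IsAvoiding 0 (Fin.last n) ↔ Avoids1324 σ := by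
    rw [← listAvoids1324_ofFn_iff, h]
    exact ⟨fun hD => hD.avoids, fun hD => ⟨hlt, hlist, hD⟩⟩
  have hzero : (σ.symm 0 : ℕ) = D.left.length := symm_apply_eq_length_of_ofFn_eq h
  have hlast : (σ.symm (Fin.last n) : ℕ) = (D.left ++ 0 :: D.middle).length :=
    symm_apply_eq_length_of_ofFn_eq (v := D.right) (h.trans (by simp [word]))
  rw [mem_SPerm_one_iff, ← havoids, hzero, hlast, length_append, length_cons,
    Nat.add_left_cancel_iff]
  rfl

theorem exists_word_eq_ofFn {σ : Equiv.Perm (Fin n)} {a b : Fin n} (hab : σ.symm a < σ.symm b) :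
    ∃ D : Dissection (Fin n), D.word a b = ofFn σ := by
  have hmem : ∀ c, c ∈ ofFn σ := fun c => ((isListing_ofFn σ).mem_iff c).2 (mem_univ c)
  obtain ⟨u, v, h⟩ := append_of_mem (hmem a)
  have hb : b ∉ u := fun hb => by
    obtain ⟨u, w, rfl⟩ := append_of_mem hb
    have ha := symm_apply_eq_length_of_ofFn_eq h
    have hb := symm_apply_eq_length_of_ofFn_eq (h.trans (append_assoc u (b :: w) (a :: v)))
    have hlt : (σ.symm a : ℕ) < σ.symm b := hab
    simp only [ha, hb, length_append, length_cons] at hlt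
    lia
  have hne : b ≠ a := fun h => hab.ne' (congrArg σ.symm h)
  have hbv : b ∈ v := by simpa [h, hb, hne] using hmem b
  obtain ⟨m, r, rfl⟩ := append_of_mem hbv
  exact ⟨⟨u, m, r⟩, h.symm⟩

theorem image_ofFn_SPerm_one {k : ℕ} (hk : 1 ≤ k) :
    (fun σ : Equiv.Perm (Fin (n + 1)) => ofFn σ) '' SPerm (n + 1) 1 k =
      (word · 0 (Fin.last n)) '' Avoiders 0 (Fin.last n) k := by
  ext l
  constructor
  · rintro ⟨σ, hσ, rfl⟩
    have hpos := (mem_SPerm_one_iff.1 hσ).2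
    have hlt : σ.symm 0 < σ.symm (Fin.last n) := Fin.lt_def.2 (by lia)
    obtain ⟨D, hD⟩ := exists_word_eq_ofFn hlt
    exact ⟨D, (mem_SPerm_one_iff_mem_avoiders hD.symm).1 hσ, hD⟩
  · rintro ⟨D, hD, rfl⟩
    have hIcc : Icc 0 (Fin.last n) = univ := Icc_bot_top
    obtain ⟨σ, hσ⟩ := (hIcc ▸ hD.1.listing_word).exists_ofFn_eq
    exact ⟨σ, (mem_SPerm_one_iff_mem_avoiders hσ).2 hD, hσ⟩

theorem ncard_SPerm_one (n : ℕ) {k : ℕ} (hk : 1 ≤ k) :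
    (SPerm (n + 1) 1 k).ncard = (Avoiders 0 n k).ncard := by
  have hofFn : (fun σ : Equiv.Perm (Fin (n + 1)) => ofFn σ).Injective :=
    ofFn_injective.comp DFunLike.coe_injective
  have hval : Fin.valOrderEmb (n + 1) '' Ioo 0 (Fin.last n) = Ioo 0 n :=
    Fin.image_val_Ioo 0 (Fin.last n)
  calc (SPerm (n + 1) 1 k).ncard
    _ = (Avoiders 0 (Fin.last n) k).ncard := by
      rw [← ncard_image_of_injective _ hofFn, image_ofFn_SPerm_one hk,
        (word_injOn_isAvoiding.mono fun _ hD => hD.1).ncard_image]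
    _ = (Avoiders 0 n k).ncard := (ncard_avoiders_map (Fin.valOrderEmb (n + 1)) hval k).symm

end Permutations

section Series

open Dissection PowerSeries

theorem ncard_avoiders_of_le {m n : ℕ} (h : m ≤ n) (k : ℕ) :
    (Avoiders m n k).ncard = (Avoiders 0 (n - m) k).ncard := by
  have := ncard_avoiders_map (lo := 0) (hi := n - m) (OrderEmbedding.addRight m)
    (Set.image_add_const_Ioo ..) k
  simpa [h] using this

/-- The generating function of the 1324-avoiding words listing `0, …, n` in which `n` occurs
`k` places to the right of `0`. -/
noncomputable def avoiderSeries (k : ℕ) : ℤ⟦X⟧ :=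
  PowerSeries.mk fun n => ((Avoiders 0 n k).ncard : ℤ)

theorem avoiderSeries_add {k m : ℕ} (hk : 1 ≤ k) (hm : 1 ≤ m) :
    avoiderSeries (k + m) = avoiderSeries k * avoiderSeries m := by
  ext n
  simp only [avoiderSeries, coeff_mul, coeff_mk]
  rw [ncard_avoiders_add hk hm, ← Nat.range_succ_eq_Icc_zero,
    Finset.Nat.sum_antidiagonal_eq_sum_range_succ
      fun i j => ((Avoiders 0 i k).ncard : ℤ) * (Avoiders 0 j m).ncard]
  push_cast
  refine Finset.sum_congr rfl fun b hb => ?_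
  rw [ncard_avoiders_of_le (Finset.mem_range_succ_iff.1 hb)]

theorem avoiderSeries_eq_pow {k : ℕ} (hk : 1 ≤ k) : avoiderSeries k = avoiderSeries 1 ^ k := by
  induction k, hk using Nat.le_induction with
  | base => rw [pow_one]
  | succ k hk ih => rw [avoiderSeries_add hk le_rfl, ih, pow_succ]

theorem mk_ncard_SPerm_one_eq_X_mul {k : ℕ} (hk : 1 ≤ k) :
    (PowerSeries.mk fun n => if n = 0 then 0 else ((SPerm n 1 k).ncard : ℤ)) =
      X * avoiderSeries k := by
  ext n
  cases n with
  | zero => simp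
  | succ n => simp [coeff_succ_X_mul, avoiderSeries, ncard_SPerm_one n hk]

theorem mk_ncard_SPerm_one_one_eq_avoiderSeries :
    (PowerSeries.mk fun n => if n = 0 then 0 else ((SPerm (n + 1) 1 1).ncard : ℤ)) =
      avoiderSeries 1 := by
  ext n
  have hzero : Avoiders 0 0 1 = (∅ : Set (Dissection ℕ)) :=
    Set.eq_empty_of_forall_notMem fun _ hD => hD.1.lt.false
  rcases eq_or_ne n 0 with rfl | hn
  · simp [avoiderSeries, hzero]
  · simp [avoiderSeries, hn, ncard_SPerm_one n le_rfl]

end Series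

/-- in `ℤ⟦x⟧`, with `f = Σ_{n≥1} a_{n+1,1} xⁿ` and
`T_{1,k} = Σ_{n≥1} a_{n,k} xⁿ`, we have `T_{1,k} = x ⬝ f^k` for every `k ≥ 1`. -/
theorem stmt_6 (k : ℕ) (hk : 1 ≤ k) :
    (PowerSeries.mk fun n => if n = 0 then 0 else ((SPerm n 1 k).ncard : ℤ)) =
      PowerSeries.X *
        (PowerSeries.mk fun n => if n = 0 then 0 else ((SPerm (n + 1) 1 1).ncard : ℤ)) ^ k := by
  rw [mk_ncard_SPerm_one_eq_X_mul hk, avoiderSeries_eq_pow hk,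
    mk_ncard_SPerm_one_one_eq_avoiderSeries]
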